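/- For every c > 0 and every integer n₁ ≥ 1, let Ŵ_c = {x ∈ ℍ : x₂ < c|x₁|} and l_{n₁} = [−n₁, n₁] × {⌈c n₁⌉}. Then for every w ∈ l_{n₁}, the stationary harmonic measure of w with respect to l_{n₁} ∪ Ŵ_c vanishes: lim_{N→∞} H_{l_{n₁} ∪ Ŵ_c, N}(w) = 0. -/

import Mathlib

open Filter

namespace SHM

/-- The upper half planar lattice `ℍ = {(x₁,x₂) ∈ ℤ² : x₂ ≥ 0}` (including the x-axis). -/
def upperH : Set (ℤ × ℤ) := {p | 0 ≤ p.2}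

/-- The horizontal line `L_n = {(x,n) : x ∈ ℤ}` of height `n`. -/
def lineH (n : ℤ) : Set (ℤ × ℤ) := {p | p.2 = n}

/-- The four unit steps of the planar simple random walk. -/
def dirs : Finset (ℤ × ℤ) := {(1,0), (-1,0), (0,1), (0,-1)}

/-- The position after `m` steps of the walk started at `z` whose first `n`
increments are given by `σ`. -/
def pos (z : ℤ × ℤ) {n : ℕ} (σ : Fin n → ℤ × ℤ) (m : ℕ) : ℤ × ℤ :=
  z + ∑ i ∈ Finset.univ.filter (fun i : Fin n => (i : ℕ) < m), σ i

/-- The probability that the first `n` increments of the simple random walk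
(each uniform on the four unit vectors) satisfy the predicate `E`. -/
noncomputable def stepProb (n : ℕ) (E : (Fin n → ℤ × ℤ) → Prop) : ℝ :=
  (Nat.card {σ : Fin n → ↥dirs // E fun i => ((σ i : ℤ × ℤ))} : ℝ) / 4 ^ n

/-- `P_z(S_{τ̄_A} = x)` : the walk started at `z` hits `A` (in finite time) for the
first time precisely at the point `x`.  Here `τ̄_A = min {m ≥ 0 : S_m ∈ A}`. -/
noncomputable def hitProb (z : ℤ × ℤ) (A : Set (ℤ × ℤ)) (x : ℤ × ℤ) : ℝ :=
  ∑' n : ℕ, stepProb n fun σ =>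
    pos z σ n = x ∧ x ∈ A ∧ ∀ m < n, pos z σ m ∉ A

/-- `P_z(τ̄_A < τ̄_B)` : the walk started at `z` hits `A` strictly before hitting `B`. -/
noncomputable def hitBeforeProb (z : ℤ × ℤ) (A B : Set (ℤ × ℤ)) : ℝ :=
  ∑' n : ℕ, stepProb n fun σ =>
    pos z σ n ∈ A ∧ pos z σ n ∉ B ∧ ∀ m < n, pos z σ m ∉ A ∧ pos z σ m ∉ B

/-- The stationary harmonic measure `H_{B,N}(x) = Σ_{z ∈ L_N \ B} P_z(S_{τ̄_{B ∪ L₀}} = x)`. -/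
noncomputable def harm (B : Set (ℤ × ℤ)) (N : ℕ) (x : ℤ × ℤ) : ℝ :=
  ∑' z : ↥(lineH (N : ℤ) \ B), hitProb (z : ℤ × ℤ) (B ∪ lineH 0) x

/-- The open linear wedge `Ŵ_c = {x ∈ ℍ : x₂ < c|x₁|}`. -/
def wedgeW (c : ℝ) : Set (ℤ × ℤ) := {x ∈ upperH | (x.2 : ℝ) < c * |(x.1 : ℝ)|}

/-- The horizontal segment `l_{n₁} = [−n₁, n₁] × {⌈c n₁⌉}`. -/
def segTop (c : ℝ) (n₁ : ℕ) : Set (ℤ × ℤ) :=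
  {x | -(n₁ : ℤ) ≤ x.1 ∧ x.1 ≤ (n₁ : ℤ) ∧ x.2 = ⌈c * (n₁ : ℝ)⌉}

/-- Probability that the walk first hits `A` at time `n`, at `x`. -/
noncomputable def pr (A : Set (ℤ × ℤ)) (x : ℤ × ℤ) (n : ℕ) (z : ℤ × ℤ) : ℝ :=
  stepProb n fun σ => pos z σ n = x ∧ x ∈ A ∧ ∀ m < n, pos z σ m ∉ A

lemma pos_zero (z : ℤ × ℤ) {n : ℕ} (σ : Fin n → ℤ × ℤ) : pos z σ 0 = z := by
  simp [pos]

lemma pos_succ (z : ℤ × ℤ) {n : ℕ} (σ : Fin (n+1) → ℤ × ℤ) (m : ℕ) :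
    pos z σ (m+1) = pos (z + σ 0) (fun i : Fin n => σ i.succ) m := by
  unfold pos
  rw [Finset.sum_filter, Finset.sum_filter, Fin.sum_univ_succ]
  simp [add_assoc]

lemma pr_nonneg (A : Set (ℤ × ℤ)) (x : ℤ × ℤ) (n : ℕ) (z : ℤ × ℤ) : 0 ≤ pr A x n z := by
  unfold pr stepProb; positivity

lemma stepProb_le_one (n : ℕ) (E : (Fin n → ℤ × ℤ) → Prop) : stepProb n E ≤ 1 := by
  unfold stepProb
  rw [div_le_one (by positivity)]
  have h := Nat.card_le_card_of_injective (α := {σ : Fin n → ↥dirs // E fun i => ((σ i : ℤ × ℤ))})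
    Subtype.val Subtype.val_injective
  have h2 : Nat.card (Fin n → ↥dirs) = 4 ^ n := by
    have hd : dirs.card = 4 := by decide
    rw [Nat.card_eq_fintype_card, Fintype.card_fun, Fintype.card_coe, hd, Fintype.card_fin]
  rw [h2] at h
  exact_mod_cast h

lemma pr_zero_le (A : Set (ℤ × ℤ)) (x z : ℤ × ℤ) : pr A x 0 z ≤ 1 := stepProb_le_one _ _

lemma pr_zero_of_ne (A : Set (ℤ × ℤ)) (x z : ℤ × ℤ) (h : z ≠ x) : pr A x 0 z = 0 := by
  simp [pr, stepProb, pos_zero, h]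

lemma pr_zero_of_notMem (A : Set (ℤ × ℤ)) (x z : ℤ × ℤ) (h : z ∉ A) : pr A x 0 z = 0 := by
  by_cases hz : z = x
  · subst hz
    simp [pr, stepProb, pos_zero, h]
  · exact pr_zero_of_ne A x z hz

lemma pr_succ_of_mem (A : Set (ℤ × ℤ)) (x z : ℤ × ℤ) (n : ℕ) (h : z ∈ A) :
    pr A x (n+1) z = 0 := by
  unfold pr stepProb
  have : IsEmpty {σ : Fin (n+1) → ↥dirs // pos z (fun i => ((σ i : ℤ × ℤ))) (n+1) = x ∧ x ∈ A ∧
      ∀ m < n+1, pos z (fun i => ((σ i : ℤ × ℤ))) m ∉ A} := by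
    constructor
    rintro ⟨σ, -, -, h3⟩
    have := h3 0 (by omega)
    rw [pos_zero] at this
    exact this h
  rw [Nat.card_of_isEmpty]; simp

lemma pr_succ_of_notMem (A : Set (ℤ × ℤ)) (x z : ℤ × ℤ) (n : ℕ) (h : z ∉ A) :
    pr A x (n+1) z = (∑ d ∈ dirs, pr A x n (z + d)) / 4 := by
  unfold pr stepProb
  have e : {σ : Fin (n+1) → ↥dirs // pos z (fun i => ((σ i : ℤ × ℤ))) (n+1) = x ∧ x ∈ A ∧
      ∀ m < n+1, pos z (fun i => ((σ i : ℤ × ℤ))) m ∉ A} ≃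
      Σ d : ↥dirs, {σ : Fin n → ↥dirs // pos (z + d) (fun i => ((σ i : ℤ × ℤ))) n = x ∧ x ∈ A ∧
      ∀ m < n, pos (z + d) (fun i => ((σ i : ℤ × ℤ))) m ∉ A} := by
    refine Equiv.trans ?_ (Equiv.subtypeProdEquivSigmaSubtype
      (fun (d : ↥dirs) (σ : Fin n → ↥dirs) => pos (z + d) (fun i => ((σ i : ℤ × ℤ))) n = x ∧ x ∈ A ∧
      ∀ m < n, pos (z + d) (fun i => ((σ i : ℤ × ℤ))) m ∉ A))
    refine (Equiv.subtypeEquiv (Fin.consEquiv (fun _ => ↥dirs)).symm ?_)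
    intro σ
    have h0 : ((Fin.consEquiv (fun _ => ↥dirs)).symm σ) = (σ 0, fun i : Fin n => σ i.succ) := rfl
    rw [h0, pos_succ]
    refine and_congr_right fun _ => and_congr_right fun _ => ?_
    constructor
    · intro hm m hmn
      have := hm (m+1) (by omega)
      rwa [pos_succ] at this
    · intro hm m hmn
      cases m with
      | zero => rwa [pos_zero]
      | succ m => rw [pos_succ]; exact hm m (by omega)
  rw [Nat.card_congr e, Nat.card_sigma]
  rw [← Finset.sum_coe_sort dirs]
  push_cast
  rw [← Finset.sum_div, div_div, pow_succ]

/-- partial sums -/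
noncomputable def ps (A : Set (ℤ × ℤ)) (x : ℤ × ℤ) (M : ℕ) (z : ℤ × ℤ) : ℝ :=
  ∑ n ∈ Finset.range M, pr A x n z

lemma ps_zero (A : Set (ℤ × ℤ)) (x z : ℤ × ℤ) : ps A x 0 z = 0 := by simp [ps]

lemma ps_mem (A : Set (ℤ × ℤ)) (x z : ℤ × ℤ) (M : ℕ) (h : z ∈ A) :
    ps A x (M+1) z = pr A x 0 z := by
  unfold ps
  rw [Finset.sum_range_succ', Finset.sum_eq_zero (fun n _ => pr_succ_of_mem A x z n h), zero_add]

lemma ps_notMem (A : Set (ℤ × ℤ)) (x z : ℤ × ℤ) (M : ℕ) (h : z ∉ A) :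
    ps A x (M+1) z = (ps A x M (z + (1,0)) + ps A x M (z + (-1,0)) + ps A x M (z + (0,1))
      + ps A x M (z + (0,-1))) / 4 := by
  unfold ps
  rw [Finset.sum_range_succ', pr_zero_of_notMem A x z h, add_zero,
    Finset.sum_congr rfl (fun n _ => pr_succ_of_notMem A x z n h)]
  rw [← Finset.sum_div, Finset.sum_comm]
  simp [dirs]
  ring

lemma ps_le_one (A : Set (ℤ × ℤ)) (x : ℤ × ℤ) (M : ℕ) : ∀ z, ps A x M z ≤ 1 := by
  induction M with
  | zero => intro z; rw [ps_zero]; norm_num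
  | succ M ih =>
    intro z
    by_cases h : z ∈ A
    · rw [ps_mem A x z M h]; exact pr_zero_le A x z
    · rw [ps_notMem A x z M h]
      linarith [ih (z + (1,0)), ih (z + (-1,0)), ih (z + (0,1)), ih (z + (0,-1))]

lemma hitProb_nonneg (z : ℤ × ℤ) (A : Set (ℤ × ℤ)) (x : ℤ × ℤ) : 0 ≤ hitProb z A x :=
  tsum_nonneg (fun n => pr_nonneg A x n z)

lemma hitProb_le (z : ℤ × ℤ) (A : Set (ℤ × ℤ)) (x : ℤ × ℤ) (b : ℝ)
    (h : ∀ M, ps A x M z ≤ b) : hitProb z A x ≤ b :=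
  Real.tsum_le_of_sum_range_le (fun n => pr_nonneg A x n z) h

lemma choose_two (a : ℝ) : Ring.choose a 2 = a * (a - 1) / 2 := by
  have h := Ring.descPochhammer_eq_factorial_smul_choose a 2
  rw [descPochhammer_succ_right, descPochhammer_one] at h
  simp [Polynomial.smeval_mul, Polynomial.smeval_sub, Nat.factorial] at h
  linarith

lemma taylor2 (s : ℝ) : ∃ C δ : ℝ, 0 ≤ C ∧ 0 < δ ∧ ∀ u : ℝ, |u| ≤ δ →
    |(1 + u) ^ (-s) - (1 - s * u + s * (s + 1) / 2 * u ^ 2)| ≤ C * |u| ^ 3 := by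
  have h := (Real.one_add_rpow_hasFPowerSeriesAt_zero (a := -s)).isBigO_sub_partialSum_pow 3
  obtain ⟨C, hC, hb⟩ := h.exists_nonneg
  rw [Asymptotics.IsBigOWith_def, Metric.eventually_nhds_iff] at hb
  obtain ⟨ε, hε, hb⟩ := hb
  refine ⟨C, ε / 2, hC, by linarith, fun u hu => ?_⟩
  have := hb (y := u) (by simp; linarith)
  simp [FormalMultilinearSeries.partialSum, Finset.sum_range_succ, 
    binomialSeries, FormalMultilinearSeries.coeff_ofScalars, choose_two] at this
  convert this using 2
  ring_nf

/-- The supersolution. -/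
noncomputable def gf (s η x y : ℝ) : ℝ :=
  y * (x ^ 2 + y ^ 2) ^ (-(s + 1/2)) - η * (x ^ 2 + y ^ 2) ^ (-s)

lemma gf_scale (s η x y ρ r u : ℝ) (hr : 0 < r) (hρ : ρ = r ^ 2) (hu : 0 ≤ 1 + u)
    (h : x ^ 2 + y ^ 2 = ρ * (1 + u)) :
    gf s η x y = ρ ^ (-(s + 1/2)) * (y * (1 + u) ^ (-(s + 1/2)) - η * r * (1 + u) ^ (-s)) := by
  have hρ0 : 0 < ρ := by rw [hρ]; positivity
  unfold gf
  rw [h, Real.mul_rpow hρ0.le hu, Real.mul_rpow hρ0.le hu]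
  have h1 : ρ ^ (-s) = ρ ^ (-(s + 1/2)) * r := by
    have : r = ρ ^ (1/2 : ℝ) := by
      rw [hρ, ← Real.sqrt_eq_rpow, Real.sqrt_sq hr.le]
    nth_rw 1 [this]
    rw [← Real.rpow_add hρ0]
    congr 1; ring
  rw [h1]; ring

set_option maxHeartbeats 800000 in
lemma alg_ineq (s η C r x y k e1 e2 e3 e4 f1 f2 f3 f4 : ℝ)
    (hs : 1/2 < s) (hs1 : 4 * s ^ 2 - 1 ≤ η / 2) (hη : 0 < η) (hη1 : η ≤ 1) (hr : 1 ≤ r)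
    (hy : 0 ≤ y) (hC : 0 ≤ C)
    (hρ : x ^ 2 + y ^ 2 = r ^ 2) (hk : k * r ^ 2 = 1)
    (hbig : 2 * (6 * (s + 1/2) * (s + 3/2) + 324 * C) ≤ η * r) (hy1 : 1 ≤ y)
    (he1 : |e1| ≤ 27 * C * k / r) (he2 : |e2| ≤ 27 * C * k / r) (he3 : |e3| ≤ 27 * C * k / r)
    (he4 : |e4| ≤ 27 * C * k / r) (hf1 : |f1| ≤ 27 * C * k / r) (hf2 : |f2| ≤ 27 * C * k / r)
    (hf3 : |f3| ≤ 27 * C * k / r) (hf4 : |f4| ≤ 27 * C * k / r)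
    (T1 T2 : ℝ → ℝ) (hT1 : T1 = fun u => 1 - (s + 1/2) * u + (s + 1/2) * (s + 1/2 + 1) / 2 * u ^ 2)
    (hT2 : T2 = fun u => 1 - s * u + s * (s + 1) / 2 * u ^ 2) :
    (y * (T1 ((2 * x + 1) * k) + e1) - η * r * (T2 ((2 * x + 1) * k) + f1))
    + (y * (T1 ((-2 * x + 1) * k) + e2) - η * r * (T2 ((-2 * x + 1) * k) + f2))
    + ((y + 1) * (T1 ((2 * y + 1) * k) + e3) - η * r * (T2 ((2 * y + 1) * k) + f3))
    + ((y - 1) * (T1 ((-2 * y + 1) * k) + e4) - η * r * (T2 ((-2 * y + 1) * k) + f4))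
    ≤ 4 * (y - η * r) := by
  have hr0 : 0 < r := by linarith
  have hk0 : 0 < k := by
    by_contra h
    nlinarith only [sq_nonneg r, h, hk]
  have hyr : y ≤ r := by nlinarith only [sq_nonneg x, hρ, hy, hr]
  have hkr : k * r ≤ 1 := by nlinarith only [hk, mul_pos hk0 hr0, hr]
  have hk2 : k ^ 2 * (x ^ 2 + y ^ 2) = k := by rw [hρ]; linear_combination k * hk
  have key1 : ∀ Y e : ℝ, 0 ≤ Y → Y ≤ 2 * r → |e| ≤ 27 * C * k / r → Y * e ≤ 54 * C * k := by
    intro Y e h0 h1 h2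
    calc Y * e ≤ Y * |e| := by gcongr; exact le_abs_self e
      _ ≤ (2 * r) * (27 * C * k / r) := by gcongr
      _ = 54 * C * k := by field_simp; ring
  have key2 : ∀ f : ℝ, |f| ≤ 27 * C * k / r → -(η * r * f) ≤ 27 * C * k := by
    intro f h2
    calc -(η * r * f) = η * r * (-f) := by ring
      _ ≤ 1 * r * |f| := by
        have := neg_le_abs f
        have h3 : η * r * (-f) ≤ η * r * |f| := by gcongr
        have h4 : η * r * |f| ≤ 1 * r * |f| := by gcongr
        linarith
      _ ≤ 1 * r * (27 * C * k / r) := by gcongr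
      _ = 27 * C * k := by field_simp
  have a1 := key1 y e1 hy (by linarith) he1
  have a2 := key1 y e2 hy (by linarith) he2
  have a3 := key1 (y + 1) e3 (by linarith) (by linarith) he3
  have a4 := key1 (y - 1) e4 (by linarith) (by linarith) he4
  have b1 := key2 f1 hf1
  have b2 := key2 f2 hf2
  have b3 := key2 f3 hf3
  have b4 := key2 f4 hf4
  have id1 : y * T1 ((2 * x + 1) * k) + y * T1 ((-2 * x + 1) * k) + (y + 1) * T1 ((2 * y + 1) * k)
      + (y - 1) * T1 ((-2 * y + 1) * k) =
      4 * y + k * ((4 * s ^ 2 - 1) * y + 6 * (s + 1/2) * (s + 3/2) * (y * k)) := by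
    rw [hT1]
    linear_combination (4 * (s + 1/2) * (s + 3/2) * y) * hk2
  have id2 : T2 ((2 * x + 1) * k) + T2 ((-2 * x + 1) * k) + T2 ((2 * y + 1) * k)
      + T2 ((-2 * y + 1) * k) =
      4 + k * (4 * s ^ 2 + 2 * s * (s + 1) * k) := by
    rw [hT2]
    linear_combination (4 * s * (s + 1)) * hk2
  have hs2 : 1 ≤ 4 * s ^ 2 := by nlinarith only [hs]
  have c1 : y * k ≤ 1 := by
    have : y * k ≤ r * k := by gcongr
    linarith only [this, hkr]
  have c2 : 6 * (s + 1/2) * (s + 3/2) * (y * k) ≤ 6 * (s + 1/2) * (s + 3/2) :=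
    mul_le_of_le_one_right (by positivity) c1
  have c3 : (4 * s ^ 2 - 1) * y ≤ η / 2 * r := by
    calc (4 * s ^ 2 - 1) * y ≤ η / 2 * y := by gcongr
      _ ≤ η / 2 * r := by gcongr
  have c4 : η * r ≤ η * r * (4 * s ^ 2 + 2 * s * (s + 1) * k) := by
    apply le_mul_of_one_le_right (by positivity)
    have : 0 ≤ 2 * s * (s + 1) * k := by positivity
    linarith only [this, hs2]
  have c5 : k * ((4 * s ^ 2 - 1) * y + 6 * (s + 1/2) * (s + 3/2) * (y * k)
      - η * r * (4 * s ^ 2 + 2 * s * (s + 1) * k) + 324 * C) ≤ 0 := by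
    apply mul_nonpos_of_nonneg_of_nonpos hk0.le
    linarith
  have expand : η * r * (T2 ((2 * x + 1) * k) + T2 ((-2 * x + 1) * k) + T2 ((2 * y + 1) * k)
      + T2 ((-2 * y + 1) * k)) = η * r * (4 + k * (4 * s ^ 2 + 2 * s * (s + 1) * k)) := by rw [id2]
  linarith

lemma gf_super (s η : ℝ) (hs : 1/2 < s) (hs1 : 4 * s ^ 2 - 1 ≤ η / 2) (hη : 0 < η) (hη1 : η ≤ 1) :
    ∃ R : ℝ, 0 < R ∧ ∀ x y : ℝ, 1 ≤ y → R ^ 2 ≤ x ^ 2 + y ^ 2 →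
      gf s η (x + 1) y + gf s η (x - 1) y + gf s η x (y + 1) + gf s η x (y - 1)
        ≤ 4 * gf s η x y := by
  obtain ⟨C1, δ1, hC1, hδ1, h1⟩ := taylor2 (s + 1/2)
  obtain ⟨C2, δ2, hC2, hδ2, h2⟩ := taylor2 s
  set C := max C1 C2 with hCdef
  have hC : 0 ≤ C := le_trans hC1 (le_max_left _ _)
  set δ := min (min δ1 δ2) (1/2) with hδdef
  have hδ : 0 < δ := by simp [hδdef, hδ1, hδ2]
  have hd1 : δ ≤ δ1 := (min_le_left _ _).trans (min_le_left _ _)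
  have hd2 : δ ≤ δ2 := (min_le_left _ _).trans (min_le_right _ _)
  have hd3 : δ ≤ 1/2 := min_le_right _ _
  set Q := 2 * (6 * (s + 1/2) * (s + 3/2) + 324 * C) with hQ
  have hQ0 : 0 ≤ Q := by rw [hQ]; positivity
  refine ⟨1 + 3 / δ + Q / η, by positivity, fun x y hy hR => ?_⟩
  obtain ⟨r, hr0, hρ⟩ : ∃ r : ℝ, 0 ≤ r ∧ x ^ 2 + y ^ 2 = r ^ 2 :=
    ⟨√(x ^ 2 + y ^ 2), Real.sqrt_nonneg _, (Real.sq_sqrt (by positivity)).symm⟩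
  have hrR : 1 + 3 / δ + Q / η ≤ r := by
    rw [hρ] at hR
    exact (sq_le_sq₀ (by positivity) hr0).mp hR
  have hA : 0 ≤ 3 / δ := by positivity
  have hB : 0 ≤ Q / η := by positivity
  have hr : 1 ≤ r := by linarith
  have hrp : 0 < r := by linarith
  have hrδ : 3 / r ≤ δ := by
    have : 3 / δ ≤ r := by linarith
    rw [div_le_iff₀ hδ] at this
    rw [div_le_iff₀ hrp]; linarith
  have hbig : Q ≤ η * r := by
    have : Q / η ≤ r := by linarith
    rw [div_le_iff₀ hη] at this; linarith
  set k := 1 / r ^ 2 with hkdef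
  have hk : k * r ^ 2 = 1 := by rw [hkdef]; field_simp
  have hkp : 0 < k := by rw [hkdef]; positivity
  have hxr : |x| ≤ r := abs_le_of_sq_le_sq (by nlinarith) hr0
  have hyr : |y| ≤ r := abs_le_of_sq_le_sq (by nlinarith) hr0
  have hu : ∀ t : ℝ, |t| ≤ r → |(2 * t + 1) * k| ≤ 3 / r := by
    intro t ht
    rw [abs_mul, abs_of_pos hkp]
    have : |2 * t + 1| ≤ 3 * r := by
      rw [abs_le] at ht ⊢
      constructor <;> linarith
    calc |2 * t + 1| * k ≤ 3 * r * k := by gcongr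
      _ = 3 / r := by rw [hkdef]; field_simp
  have hcube : ∀ u : ℝ, |u| ≤ 3 / r → ∀ C' ≤ C, C' * |u| ^ 3 ≤ 27 * C * k / r := by
    intro u hu C' hC'
    calc C' * |u| ^ 3 ≤ C * (3 / r) ^ 3 := by gcongr
      _ = 27 * C * k / r := by rw [hkdef]; field_simp; ring
  have E1 : ∀ u : ℝ, |u| ≤ 3 / r → |(1 + u) ^ (-(s + 1/2)) - (1 - (s + 1/2) * u +
      (s + 1/2) * (s + 1/2 + 1) / 2 * u ^ 2)| ≤ 27 * C * k / r := fun u hu =>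
    (h1 u (by linarith)).trans (hcube u hu C1 (le_max_left _ _))
  have E2 : ∀ u : ℝ, |u| ≤ 3 / r → |(1 + u) ^ (-s) - (1 - s * u +
      s * (s + 1) / 2 * u ^ 2)| ≤ 27 * C * k / r := fun u hu =>
    (h2 u (by linarith)).trans (hcube u hu C2 (le_max_right _ _))
  have U1 := hu x hxr
  have U2 : |(-2 * x + 1) * k| ≤ 3 / r := by
    have := hu (-x) (by rwa [abs_neg]); rwa [show 2 * -x = -2 * x by ring] at this
  have U3 := hu y hyr
  have U4 : |(-2 * y + 1) * k| ≤ 3 / r := by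
    have := hu (-y) (by rwa [abs_neg]); rwa [show 2 * -y = -2 * y by ring] at this
  have pos1 : ∀ u : ℝ, |u| ≤ 3 / r → 0 ≤ 1 + u := by
    intro u hu
    have := neg_abs_le u
    linarith
  have G0 := gf_scale s η x y (r ^ 2) r 0 hrp rfl (by norm_num) (by rw [hρ]; ring)
  have G1 := gf_scale s η (x + 1) y (r ^ 2) r _ hrp rfl (pos1 _ U1)
    (by linear_combination hρ - (2 * x + 1) * hk)
  have G2 := gf_scale s η (x - 1) y (r ^ 2) r _ hrp rfl (pos1 _ U2)
    (by linear_combination hρ - (-2 * x + 1) * hk)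
  have G3 := gf_scale s η x (y + 1) (r ^ 2) r _ hrp rfl (pos1 _ U3)
    (by linear_combination hρ - (2 * y + 1) * hk)
  have G4 := gf_scale s η x (y - 1) (r ^ 2) r _ hrp rfl (pos1 _ U4)
    (by linear_combination hρ - (-2 * y + 1) * hk)
  rw [G0, G1, G2, G3, G4]
  have M := alg_ineq s η C r x y k _ _ _ _ _ _ _ _ hs hs1 hη hη1 hr (by linarith) hC hρ hk hbig hy
    (E1 _ U1) (E1 _ U2) (E1 _ U3) (E1 _ U4) (E2 _ U1) (E2 _ U2) (E2 _ U3) (E2 _ U4) _ _ rfl rfl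
  simp only [add_sub_cancel] at M
  simp only [add_zero, Real.one_rpow, mul_one]
  have hp : 0 ≤ (r ^ 2) ^ (-(s + 1/2)) := by positivity
  have := mul_le_mul_of_nonneg_left M hp
  linarith

set_option maxHeartbeats 1000000 in
lemma ps_bound (c : ℝ) (hc : 0 < c) (n₁ : ℕ) (w : ℤ × ℤ) :
    ∃ s K η : ℝ, 1/2 < s ∧ 0 ≤ K ∧ 0 < η ∧ ∀ M : ℕ, ∀ z : ℤ × ℤ, 1 ≤ z.2 →
      c * |(z.1 : ℝ)| ≤ z.2 →
      ps ((segTop c n₁ ∪ wedgeW c) ∪ lineH 0) w M z ≤ K * gf s η z.1 z.2 := by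
  set A := (segTop c n₁ ∪ wedgeW c) ∪ lineH 0 with hA
  set η := c / (3 * (1 + c)) with hηd
  have hη : 0 < η := by positivity
  have hη3 : 3 * η * (1 + c) = c := by rw [hηd]; field_simp
  have hη1 : η ≤ 1 / 3 := by nlinarith
  set s := 1/2 + η / 16 with hsd
  have hs : 1/2 < s := by linarith
  have hs1 : 4 * s ^ 2 - 1 ≤ η / 2 := by rw [hsd]; nlinarith
  obtain ⟨R0, hR0, hsup⟩ := gf_super s η hs hs1 hη (by linarith)
  set R := R0 + 3 / η + (|(w.1 : ℝ)| + |(w.2 : ℝ)| + 1) with hRd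
  have hRp : 0 < R := by positivity
  have h3η : 0 < 3 / η := by positivity
  have hw0 : 0 < |(w.1 : ℝ)| + |(w.2 : ℝ)| + 1 := by positivity
  have hRR0 : R0 ≤ R := by linarith
  have hRη : 3 ≤ η * R := by
    have : 3 / η ≤ R := by linarith
    rw [div_le_iff₀ hη] at this; linarith
  have hRw : (w.1 : ℝ) ^ 2 + (w.2 : ℝ) ^ 2 < R ^ 2 := by
    have h1 : (w.1 : ℝ) ^ 2 + (w.2 : ℝ) ^ 2 ≤ (|(w.1 : ℝ)| + |(w.2 : ℝ)|) ^ 2 := by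
      have h1 := sq_abs (w.1 : ℝ)
      have h2 := sq_abs (w.2 : ℝ)
      nlinarith [mul_nonneg (abs_nonneg (w.1 : ℝ)) (abs_nonneg (w.2 : ℝ))]
    have h2 : (|(w.1 : ℝ)| + |(w.2 : ℝ)|) ^ 2 < R ^ 2 := by
      apply pow_lt_pow_left₀ _ (by positivity) (by norm_num)
      linarith
    linarith
  -- cone condition
  have cone : ∀ x y r : ℝ, 0 ≤ r → x ^ 2 + y ^ 2 = r ^ 2 → 0 ≤ y → c * |x| ≤ y → 3 * η * r ≤ y := by
    intro x y r hr h hy hcx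
    have h1 : r ≤ |x| + y := by
      apply le_of_sq_le_sq _ (by positivity)
      have := sq_abs x
      nlinarith [mul_nonneg (abs_nonneg x) hy]
    have h2 : c * r ≤ (1 + c) * y := by nlinarith
    have h3 : 3 * η * r * (1 + c) ≤ y * (1 + c) := by
      calc 3 * η * r * (1 + c) = c * r := by linear_combination r * hη3
        _ ≤ _ := by linarith
    exact le_of_mul_le_mul_right h3 (by linarith)
  -- lower bound for the supersolution
  have glow : ∀ x y r : ℝ, 0 < r → x ^ 2 + y ^ 2 = r ^ 2 → 2 * η * r ≤ y →
      η * (r ^ 2) ^ (-s) ≤ gf s η x y := by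
    intro x y r hr h hy
    have e := gf_scale s η x y (r ^ 2) r 0 hr rfl (by norm_num) (by rw [h]; ring)
    have e2 : (r ^ 2) ^ (-s) = (r ^ 2) ^ (-(s + 1/2)) * r := by
      have := gf_scale s (-1) r 0 (r ^ 2) r 0 hr rfl (by norm_num) (by ring)
      simp [gf] at this
      simpa using this
    rw [e, e2]
    simp only [add_zero, Real.one_rpow, mul_one]
    have hp : 0 ≤ (r ^ 2) ^ (-(s + 1/2)) := by positivity
    have : (r ^ 2) ^ (-(s + 1/2)) * (η * r) ≤ (r ^ 2) ^ (-(s + 1/2)) * (y - η * r) := by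
      gcongr; linarith
    linarith
  set K := (R ^ 2) ^ s / η with hKd
  have hK : 0 < K := by positivity
  have main : ∀ M : ℕ, ∀ z : ℤ × ℤ, 1 ≤ z.2 → ∀ r : ℝ, 0 < r →
      (z.1 : ℝ) ^ 2 + (z.2 : ℝ) ^ 2 = r ^ 2 → 2 * η * r ≤ z.2 →
      ps A w M z ≤ K * gf s η z.1 z.2 := by
    intro M
    induction M with
    | zero =>
      intro z hz r hr h hy
      rw [ps_zero]
      have := glow _ _ r hr h hy
      have h0 : 0 ≤ η * (r ^ 2) ^ (-s) := by positivity
      exact mul_nonneg hK.le (h0.trans this)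
    | succ M ih =>
      intro z hz r hr h hy
      have hg := glow _ _ r hr h hy
      by_cases hnear : r < R
      · have h1 : (R ^ 2) ^ (-s) ≤ (r ^ 2) ^ (-s) := by
          apply Real.rpow_le_rpow_of_nonpos (by positivity) (by gcongr) (by linarith)
        have h2 : K * (η * (R ^ 2) ^ (-s)) = 1 := by
          rw [hKd, Real.rpow_neg (by positivity)]
          field_simp
        calc ps A w (M+1) z ≤ 1 := ps_le_one _ _ _ _
          _ = K * (η * (R ^ 2) ^ (-s)) := h2.symm
          _ ≤ K * gf s η z.1 z.2 := by
            apply mul_le_mul_of_nonneg_left _ hK.le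
            exact le_trans (by gcongr) hg
      · push Not at hnear
        by_cases hzA : z ∈ A
        · rw [ps_mem _ _ _ _ hzA, pr_zero_of_ne]
          · have h0 : 0 ≤ η * (r ^ 2) ^ (-s) := by positivity
            exact mul_nonneg hK.le (h0.trans hg)
          · rintro rfl
            rw [h] at hRw
            have : R ^ 2 ≤ r ^ 2 := by gcongr
            linarith
        · rw [ps_notMem _ _ _ _ hzA]
          have hcone : c * |(z.1 : ℝ)| ≤ z.2 := by
            by_contra hcon
            push Not at hcon
            apply hzA
            left; right
            exact ⟨by show (0:ℤ) ≤ z.2; omega, hcon⟩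
          have hzR : (1 : ℝ) ≤ z.2 := by exact_mod_cast hz
          have h3 := cone _ _ r hr.le h (by linarith) hcone
          have hηr : 3 ≤ η * r := hRη.trans (by gcongr)
          have step : ∀ d : ℤ × ℤ, (d.1 : ℝ) ^ 2 + (d.2 : ℝ) ^ 2 = 1 → (-1 : ℝ) ≤ d.2 →
              ps A w M (z + d) ≤ K * gf s η ((z.1 : ℝ) + d.1) ((z.2 : ℝ) + d.2) := by
            intro d hd hd2
            obtain ⟨r', hr', hρ'⟩ : ∃ r' : ℝ, 0 ≤ r' ∧
                ((z.1 : ℝ) + d.1) ^ 2 + ((z.2 : ℝ) + d.2) ^ 2 = r' ^ 2 :=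
              ⟨_, Real.sqrt_nonneg _, (Real.sq_sqrt (by positivity)).symm⟩
            have hle : r' ≤ r + 1 := by
              apply le_of_sq_le_sq _ (by positivity)
              have cs : ((z.1 : ℝ) * d.1 + z.2 * d.2) ≤ r := by
                apply le_of_sq_le_sq _ hr.le
                have : ((z.1 : ℝ) * d.1 + z.2 * d.2) ^ 2 + ((z.1 : ℝ) * d.2 - z.2 * d.1) ^ 2
                    = r ^ 2 := by
                  linear_combination ((d.1 : ℝ) ^ 2 + (d.2 : ℝ) ^ 2) * h + r ^ 2 * hd
                linarith only [this, sq_nonneg ((z.1 : ℝ) * d.2 - z.2 * d.1)]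
              nlinarith only [cs, h, hd, hρ']
            have hy' : 2 * η * r' ≤ (z.2 : ℝ) + d.2 := by
              have : 2 * η * r' ≤ 2 * η * (r + 1) := by gcongr
              linarith
            have hy2 : (1 : ℝ) < (z.2 : ℝ) + d.2 := by linarith
            have hr'0 : 0 < r' := by
              rcases hr'.lt_or_eq with h | h
              · exact h
              · rw [← h] at hρ'
                nlinarith only [sq_nonneg ((z.1 : ℝ) + d.1), hρ', hy2]
            have := ih (z + d) (by
              have : (1 : ℝ) < ((z.2 + d.2 : ℤ) : ℝ) := by push_cast; exact hy2
              have : (1 : ℤ) < z.2 + d.2 := by exact_mod_cast this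
              show 1 ≤ z.2 + d.2
              omega) r' hr'0 (by simpa using hρ') (by simpa using hy')
            simpa using this
          have s1 := step (1, 0) (by norm_num) (by norm_num)
          have s2 := step (-1, 0) (by norm_num) (by norm_num)
          have s3 := step (0, 1) (by norm_num) (by norm_num)
          have s4 := step (0, -1) (by norm_num) (by norm_num)
          simp only [Int.cast_one, Int.cast_zero, Int.cast_neg, add_zero, ← sub_eq_add_neg]
            at s1 s2 s3 s4
          have hS := hsup z.1 z.2 hzR (by
            rw [h]
            have : R0 ≤ r := by linarith
            gcongr)
          have hS2 := mul_le_mul_of_nonneg_left hS hK.le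
          linarith
  refine ⟨s, K, η, hs, hK.le, hη, fun M z hz hcz => ?_⟩
  have hzR : (1 : ℝ) ≤ z.2 := by exact_mod_cast hz
  have hpos : 0 < (z.1 : ℝ) ^ 2 + (z.2 : ℝ) ^ 2 := by positivity
  have hr := Real.sqrt_pos.mpr hpos
  have hsq := (Real.sq_sqrt hpos.le).symm
  refine main M z hz _ hr hsq ?_
  have := cone _ _ _ hr.le hsq (by linarith) hcz
  have h0 : 0 < η * √((z.1 : ℝ) ^ 2 + (z.2 : ℝ) ^ 2) := by positivity
  linarith

lemma gf_upper (s η x N : ℝ) (hs : 1/2 < s) (hη : 0 < η) (hN : 1 ≤ N) :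
    gf s η x N ≤ N ^ (-(2 * s)) := by
  unfold gf
  have h0 : 0 ≤ η * (x ^ 2 + N ^ 2) ^ (-s) := by positivity
  have h1 : (x ^ 2 + N ^ 2) ^ (-(s + 1/2)) ≤ (N ^ 2) ^ (-(s + 1/2)) := by
    apply Real.rpow_le_rpow_of_nonpos (by positivity) (by nlinarith [sq_nonneg x]) (by linarith)
  have h2 : N * (N ^ 2) ^ (-(s + 1/2)) = N ^ (-(2 * s)) := by
    rw [← Real.rpow_natCast N 2, ← Real.rpow_mul (by linarith)]
    nth_rw 1 [← Real.rpow_one N]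
    rw [← Real.rpow_add (by linarith)]
    congr 1; push_cast; ring
  have h3 : N * (x ^ 2 + N ^ 2) ^ (-(s + 1/2)) ≤ N * (N ^ 2) ^ (-(s + 1/2)) := by gcongr
  linarith

/-- **The segment on top of a linear wedge has zero stationary harmonic measure.**
For every `c > 0`, every integer `n₁ ≥ 1` and every `w ∈ l_{n₁} = [−n₁,n₁] × {⌈c n₁⌉}`,
the stationary harmonic measure of `w` with respect to `l_{n₁} ∪ Ŵ_c` vanishes:
`lim_{N→∞} H_{l_{n₁} ∪ Ŵ_c, N}(w) = 0`. -/
theorem harm_segment_on_wedge_tendsto_zero (c : ℝ) (hc : 0 < c) (n₁ : ℕ) (hn₁ : 1 ≤ n₁)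
    (w : ℤ × ℤ) (hw : w ∈ segTop c n₁) :
    Tendsto (fun N : ℕ => harm (segTop c n₁ ∪ wedgeW c) N w) atTop (nhds 0) := by
  obtain ⟨s, K, η, hs, hK, hη, hb⟩ := ps_bound c hc n₁ w
  have lim : Tendsto (fun N : ℕ => (2 / c + 3) * K * (N : ℝ) ^ (-(2 * s - 1))) atTop (nhds 0) := by
    have := ((tendsto_rpow_neg_atTop (y := 2 * s - 1) (by linarith)).comp
      tendsto_natCast_atTop_atTop).const_mul ((2 / c + 3) * K)
    simpa using this
  refine squeeze_zero' (Eventually.of_forall fun N => tsum_nonneg fun z => hitProb_nonneg _ _ _) ?_ lim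
  filter_upwards [eventually_ge_atTop 1] with N hN
  have hNR : (1 : ℝ) ≤ N := by exact_mod_cast hN
  unfold harm
  set B := segTop c n₁ ∪ wedgeW c with hB
  rw [tsum_subtype (lineH (N : ℤ) \ B) (fun z => hitProb z (B ∪ lineH 0) w)]
  set m : ℤ := ⌊(N : ℝ) / c⌋ with hm
  have hm0 : 0 ≤ m := Int.floor_nonneg.mpr (by positivity)
  have mem : ∀ z ∈ lineH (N : ℤ) \ B, z.2 = N ∧ c * |(z.1 : ℝ)| ≤ N := by
    rintro z ⟨hz1, hz2⟩
    have hz1 : z.2 = N := hz1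
    refine ⟨hz1, ?_⟩
    by_contra hcon
    push Not at hcon
    apply hz2
    right
    refine ⟨by show (0:ℤ) ≤ z.2; omega, ?_⟩
    rw [hz1]; exact_mod_cast hcon
  rw [tsum_eq_sum (s := Finset.Icc (-m) m ×ˢ {(N : ℤ)})]
  · have each : ∀ z ∈ Finset.Icc (-m) m ×ˢ {(N : ℤ)},
        (lineH (N : ℤ) \ B).indicator (fun z => hitProb z (B ∪ lineH 0) w) z
          ≤ K * (N : ℝ) ^ (-(2 * s)) := by
      intro z _
      by_cases hz : z ∈ lineH (N : ℤ) \ B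
      · rw [Set.indicator_of_mem hz]
        obtain ⟨h1, h2⟩ := mem z hz
        have hzN : (z.2 : ℝ) = N := by rw [h1]; simp
        apply hitProb_le
        intro M
        refine (hb M z (by omega) (by rw [hzN]; exact h2)).trans ?_
        rw [hzN]
        exact mul_le_mul_of_nonneg_left (gf_upper s η _ _ hs hη hNR) hK
      · rw [Set.indicator_of_notMem hz]; positivity
    refine (Finset.sum_le_card_nsmul _ _ _ each).trans ?_
    rw [Finset.card_product, Finset.card_singleton, mul_one, Int.card_Icc, nsmul_eq_mul]
    have hcard : (((m + 1 - -m).toNat : ℕ) : ℝ) ≤ (2 / c + 3) * N := by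
      have e : (((m + 1 - -m).toNat : ℕ) : ℤ) = 2 * m + 1 := by omega
      have e' : (((m + 1 - -m).toNat : ℕ) : ℝ) = 2 * m + 1 := by exact_mod_cast e
      have hfl : (m : ℝ) ≤ N / c := Int.floor_le _
      rw [e']
      have : (2 / c + 3) * N = 2 * (N / c) + 3 * N := by ring
      linarith
    have hp : (N : ℝ) ^ (-(2 * s - 1)) = N * (N : ℝ) ^ (-(2 * s)) := by
      nth_rw 2 [← Real.rpow_one (N : ℝ)]
      rw [← Real.rpow_add (by linarith)]
      congr 1; ring
    rw [hp]
    calc (((m + 1 - -m).toNat : ℕ) : ℝ) * (K * (N : ℝ) ^ (-(2 * s)))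
        ≤ (2 / c + 3) * N * (K * (N : ℝ) ^ (-(2 * s))) := by gcongr
      _ = _ := by ring
  · intro z hz
    apply Set.indicator_of_notMem
    intro hz'
    obtain ⟨h1, h2⟩ := mem z hz'
    apply hz
    rw [Finset.mem_product, Finset.mem_singleton, Finset.mem_Icc]
    refine ⟨?_, h1⟩
    rw [← abs_le, hm, Int.le_floor, le_div_iff₀ hc]
    push_cast
    linarith

end SHM
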